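/- arXiv:2210.12450 — 7 statements merged into one kernel-verified Lean document; each statement's English description precedes it below -/
import Mathlib

section
/- Let M ∈ ℕ and let p be a complex polynomial with natural degree at most M. Then for every t ∈ ℂ, Σ'_{j=0}^∞ (t^j/j!)·(coefficient of X^M in L^j p) = exp(t·M·(b₁ + a₂·(M−1)))·(coefficient of X^M in p). In particular the degree-M coefficient of e^{tL}p equals e^{tM(b₁+a₂(M−1))} times that of p. -/
open Polynomial

/-!
`L` is upper triangular in the monomial basis: it sends `X ^ n` to `n (b₁ + a₂ (n - 1)) X ^ n` plus
terms of lower degree. Hence `L` preserves the polynomials of degree at most `M` and multiplies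
their degree-`M` coefficient by the diagonal entry `M (b₁ + a₂ (M - 1))`. Iterating, the series is
the exponential series of `t` times that entry.
-/

/-- The triangular action of `L` on coefficients. -/
lemma coeff_second_order_op (a₂ a₁ a₀ b₁ b₀ : ℂ) (p : Polynomial ℂ) (n : ℕ) :
    ((C a₂ * X ^ 2 + C a₁ * X + C a₀) * derivative (derivative p) +
        (C b₁ * X + C b₀) * derivative p).coeff n =
      n * (b₁ + a₂ * (n - 1)) * p.coeff n +
        (n + 1) * (a₁ * n + b₀) * p.coeff (n + 1) +
        a₀ * (n + 1) * (n + 2) * p.coeff (n + 2) := by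
  -- In this form each power of `X` is a right factor, hence a shift of coefficients.
  have h : (C a₂ * X ^ 2 + C a₁ * X + C a₀) * derivative (derivative p) +
        (C b₁ * X + C b₀) * derivative p =
      C a₂ * (derivative (derivative p) * X * X) + C a₁ * (derivative (derivative p) * X) +
        C a₀ * derivative (derivative p) + C b₁ * (derivative p * X) + C b₀ * derivative p := by
    ring
  rw [h]
  rcases n with _ | _ | n <;>
    simp only [coeff_add, coeff_C_mul, coeff_mul_X, coeff_mul_X_zero, coeff_derivative, zero_add] <;>
    push_cast <;> ring

theorem backward_flow_leading_coeff (a₂ a₁ a₀ b₁ b₀ : ℝ)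
    (L : Polynomial ℂ → Polynomial ℂ)
    (hL : ∀ p : Polynomial ℂ, L p =
      (C (a₂ : ℂ) * X ^ 2 + C (a₁ : ℂ) * X + C (a₀ : ℂ)) * derivative (derivative p) +
        (C (b₁ : ℂ) * X + C (b₀ : ℂ)) * derivative p)
    (M : ℕ) (p : Polynomial ℂ) (hp : p.natDegree ≤ M) (t : ℂ) :
    ∑' j : ℕ, t ^ j / (j.factorial : ℂ) * ((L^[j] p).coeff M) =
      Complex.exp (t * (M : ℂ) * ((b₁ : ℂ) + (a₂ : ℂ) * ((M : ℂ) - 1))) * p.coeff M := by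
  have key : ∀ j : ℕ, (L^[j] p).natDegree ≤ M ∧
      (L^[j] p).coeff M = ((M : ℂ) * ((b₁ : ℂ) + a₂ * ((M : ℂ) - 1))) ^ j * p.coeff M := by
    intro j
    induction j with
    | zero => simpa using hp
    | succ j ih =>
      obtain ⟨hd, hc⟩ := ih
      rw [natDegree_le_iff_coeff_eq_zero] at hd ⊢
      rw [Function.iterate_succ_apply', hL]
      refine ⟨fun n hn => ?_, ?_⟩
      · rw [coeff_second_order_op, hd n hn, hd (n + 1) (by omega), hd (n + 2) (by omega)]
        ring
      · rw [coeff_second_order_op, hc, hd (M + 1) (by omega), hd (M + 2) (by omega)]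
        ring
  rw [Complex.exp_eq_exp_ℂ, NormedSpace.exp_eq_tsum_div, ← tsum_mul_right]
  refine tsum_congr fun j => ?_
  rw [(key j).2, mul_assoc t, mul_pow t]
  ring
end

section
/- Let p ∈ ℂ[X] have degree M ≥ 1 and define F : ℂ × ℂ → ℂ by F(t,z) = Σ'_{j=0}^∞ (t^j/j!)·(L^j p)(z) (these series converge absolutely). Let U ⊆ ℂ be an open set containing t₀, let c : U → ℂ be nowhere vanishing on U, and let z₁,…,z_M : U → ℂ be functions, each complex-differentiable at t₀, such that F(t,z) = c(t)·∏_{i=1}^M (z − z_i(t)) for all t ∈ U and all z ∈ ℂ, and such that z₁(t₀),…,z_M(t₀) are pairwise distinct. Then for each i = 1,…,M the derivative of z_i at t₀ equals −b(z_i(t₀)) + 2·a(z_i(t₀))·Σ_{j≠i} 1/(z_j(t₀) − z_i(t₀)), where a and b are evaluated at the complex number z_i(t₀). -/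
/-!
The operator `L` does not raise degrees, so it acts on the finite-dimensional space of polynomials
of degree at most `M`, and `F t` is the polynomial `G t = exp (t L) p` there (`exists_flow`); in
particular `∂F/∂t = L F`. Differentiating `F (t, z_i(t)) = 0` at `t₀` gives
`(L G)(z_i) + G'(z_i) z_i' = 0`, that is `a G'' + b G' + G' z_i' = 0` at `z_i = z_i(t₀)`.
As `G t₀ = c ∏ (X - z_j)` has simple zeros, `G''(z_i) = 2 G'(z_i) ∑_{j ≠ i} 1 / (z_i - z_j)`
(`eval_derivative_derivative_prod`) with `G'(z_i) ≠ 0`, and dividing by `G'(z_i)` gives the claim.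
The function `c` enters only through its nonzero value at `t₀`, so its regularity plays no role.
-/

open Polynomial

/-- The polynomial flow `t ↦ exp (t L) p` of an operator `L` preserving `degreeLT ℂ N`, together
with the derivative of its values along a moving point. -/
lemma exists_flow (N : ℕ) (L : ℂ[X] →ₗ[ℂ] ℂ[X])
    (hL : ∀ q ∈ degreeLT ℂ N, L q ∈ degreeLT ℂ N) (p : ℂ[X]) (hp : p ∈ degreeLT ℂ N) :
    ∃ G : ℂ → ℂ[X],
      (∀ t z : ℂ, HasSum (fun j : ℕ => t ^ j / (j.factorial : ℂ) * ((L^[j] p).eval z))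
        ((G t).eval z)) ∧
      ∀ (x : ℂ → ℂ) (t₀ x' : ℂ), HasDerivAt x x' t₀ →
        HasDerivAt (fun t => (G t).eval (x t))
          ((L (G t₀)).eval (x t₀) + (derivative (G t₀)).eval (x t₀) * x') t₀ := by
  -- Coordinates on `degreeLT ℂ N` supply the norm needed for the operator exponential.
  let e := degreeLTEquiv ℂ N
  let A₀ : (Fin N → ℂ) →ₗ[ℂ] (Fin N → ℂ) :=
    e.toLinearMap ∘ₗ (L.restrict hL) ∘ₗ e.symm.toLinearMap
  let A : (Fin N → ℂ) →L[ℂ] (Fin N → ℂ) := LinearMap.toContinuousLinearMap A₀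
  have hA : ∀ w, ((e.symm (A w) : degreeLT ℂ N) : ℂ[X]) = L (e.symm w : degreeLT ℂ N) := by
    intro w
    simp [A, A₀, LinearMap.restrict_apply]
  have hev : ∀ w z, ((e.symm w : degreeLT ℂ N) : ℂ[X]).eval z = ∑ k, w k * z ^ (k : ℕ) := by
    intro w z
    simp [e, degreeLTEquiv, eval_finsetSum]
  let v : Fin N → ℂ := e ⟨p, hp⟩
  let u : ℂ → Fin N → ℂ := fun t => NormedSpace.exp (t • A) v
  have hiter : ∀ j : ℕ, ((e.symm ((A ^ j) v) : degreeLT ℂ N) : ℂ[X]) = L^[j] p := by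
    intro j
    induction j with
    | zero => simp [v]
    | succ j ih =>
      rw [pow_succ', Function.iterate_succ_apply', ← ih, ← hA]
      rfl
  refine ⟨fun t => (e.symm (u t) : degreeLT ℂ N), ?_, ?_⟩
  · intro t z
    let ev : (Fin N → ℂ) →ₗ[ℂ] ℂ :=
      (Polynomial.leval z) ∘ₗ (degreeLT ℂ N).subtype ∘ₗ e.symm.toLinearMap
    let Φ : ((Fin N → ℂ) →L[ℂ] (Fin N → ℂ)) →L[ℂ] ℂ :=
      (LinearMap.toContinuousLinearMap ev).comp (ContinuousLinearMap.apply ℂ (Fin N → ℂ) v)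
    have h := (NormedSpace.exp_series_hasSum_exp' (𝕂 := ℂ) (t • A)).mapL Φ
    have hΦ : ∀ B, Φ B = ((e.symm (B v) : degreeLT ℂ N) : ℂ[X]).eval z := fun B => rfl
    have hpow : ∀ j : ℕ, ((t • A) ^ j) v = t ^ j • (A ^ j) v := by
      intro j
      induction j with
      | zero => simp
      | succ j ih =>
        rw [pow_succ', pow_succ', pow_succ']
        change t • A (((t • A) ^ j) v) = (t * t ^ j) • A ((A ^ j) v)
        rw [ih, map_smul, smul_smul]
    have hterm : (fun j : ℕ => t ^ j / (j.factorial : ℂ) * ((L^[j] p).eval z)) =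
        fun j : ℕ => Φ ((j.factorial : ℂ)⁻¹ • (t • A) ^ j) := by
      funext j
      rw [map_smul, hΦ, hpow, map_smul, Submodule.coe_smul, eval_smul, hiter, smul_eq_mul,
        smul_eq_mul]
      ring
    rw [hterm]
    exact h
  · intro x t₀ x' hx
    have hu : HasDerivAt u (A (u t₀)) t₀ := by
      have := (hasDerivAt_exp_smul_const' A t₀).clm_apply (hasDerivAt_const t₀ v)
      simpa [u] using this
    have hk := hasDerivAt_pi.1 hu
    have h := HasDerivAt.fun_sum (u := Finset.univ)
      (fun (k : Fin N) _ => (hk k).mul (hx.pow (k : ℕ)))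
    simp only [hev, ← hA]
    refine h.congr_deriv ?_
    rw [Finset.sum_add_distrib]
    congr 1
    simp [e, degreeLTEquiv, eval_finsetSum, derivative_monomial, Finset.sum_mul]
    refine Finset.sum_congr rfl fun k _ => ?_
    ring

lemma eval_derivative_prod {M : ℕ} (c : ℂ) (r : Fin M → ℂ) (i : Fin M) :
    (derivative (C c * ∏ j, (X - C (r j)))).eval (r i) =
      c * ∏ j ∈ Finset.univ.erase i, (r i - r j) := by
  rw [← Finset.mul_prod_erase _ _ (Finset.mem_univ i)]
  simp [derivative_mul, eval_prod]

/-- At a zero of a polynomial with simple zeros, `G'' = 2 G' ∑ 1 / (z_i - z_j)`: write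
`G = (X - z_i) Q`, so that `G' = Q` and `G'' = 2 Q'` at `z_i`. -/
lemma eval_derivative_derivative_prod {M : ℕ} (c : ℂ) (r : Fin M → ℂ) (i : Fin M)
    (hr : ∀ j, j ≠ i → r i - r j ≠ 0) :
    (derivative (derivative (C c * ∏ j, (X - C (r j))))).eval (r i) =
      2 * (c * ∏ j ∈ Finset.univ.erase i, (r i - r j)) *
        ∑ j ∈ Finset.univ.erase i, 1 / (r i - r j) := by
  rw [← Finset.mul_prod_erase _ _ (Finset.mem_univ i)]
  set Q : ℂ[X] := ∏ j ∈ Finset.univ.erase i, (X - C (r j)) with hQ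
  have h1 : (derivative Q).eval (r i) = (∏ j ∈ Finset.univ.erase i, (r i - r j)) *
      ∑ j ∈ Finset.univ.erase i, 1 / (r i - r j) := by
    rw [hQ, derivative_prod_finset, eval_finsetSum, Finset.mul_sum]
    refine Finset.sum_congr rfl fun j hj => ?_
    have := hr j (Finset.ne_of_mem_erase hj)
    rw [← Finset.mul_prod_erase _ (fun j => r i - r j) hj]
    simp [eval_prod]
    field_simp
  have h2 : (derivative (derivative (C c * ((X - C (r i)) * Q)))).eval (r i) =
      2 * c * (derivative Q).eval (r i) := by
    simp [derivative_mul]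
    ring
  rw [h2, h1]
  ring

lemma operator_mem_degreeLT (α β γ δ ε : ℂ) (N : ℕ) (q : ℂ[X]) (hq : q ∈ degreeLT ℂ N) :
    (C α * X ^ 2 + C β * X + C γ) * derivative (derivative q) +
      (C δ * X + C ε) * derivative q ∈ degreeLT ℂ N := by
  rw [mem_degreeLT, degree_lt_iff_coeff_zero] at *
  intro m hm
  have h0 := hq m hm
  have h1 := hq (m + 1) (by omega)
  have h2 := hq (m + 2) (by omega)
  rcases m with _ | _ | m
  · simp_all [add_mul, mul_assoc, coeff_derivative]
  · simp_all [add_mul, mul_assoc, coeff_derivative, coeff_X_pow_mul']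
  · simp_all [add_mul, mul_assoc, coeff_derivative, coeff_X_pow_mul']

/-- Equations of motion for the zeroes of `e^{tL}p`: if
`F(t,z) = Σ'_j (t^j/j!)(L^j p)(z)` factors on an open set `U ∋ t₀` as
`c(t)·∏_i (z − z_i(t))` with `c` nowhere vanishing, the `z_i` differentiable at `t₀`
and `z₁(t₀),…,z_M(t₀)` pairwise distinct, then
`z_i'(t₀) = −b(z_i(t₀)) + 2a(z_i(t₀))·Σ_{j≠i} 1/(z_j(t₀) − z_i(t₀))`. -/
theorem roots_equations_of_motion (a₂ a₁ a₀ b₁ b₀ : ℝ)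
    (L : Polynomial ℂ → Polynomial ℂ)
    (hL : ∀ p : Polynomial ℂ, L p =
      (C (a₂ : ℂ) * X ^ 2 + C (a₁ : ℂ) * X + C (a₀ : ℂ)) * derivative (derivative p) +
        (C (b₁ : ℂ) * X + C (b₀ : ℂ)) * derivative p)
    (M : ℕ) (hM : 1 ≤ M) (p : Polynomial ℂ) (hdeg : p.natDegree = M)
    (F : ℂ → ℂ → ℂ)
    (hF : ∀ t z : ℂ, F t z = ∑' j : ℕ, t ^ j / (j.factorial : ℂ) * ((L^[j] p).eval z))
    (U : Set ℂ) (hU : IsOpen U) (t₀ : ℂ) (ht₀ : t₀ ∈ U)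
    (c : ℂ → ℂ) (hc : ∀ t ∈ U, c t ≠ 0)
    (zr : Fin M → ℂ → ℂ)
    (hdiff : ∀ i : Fin M, DifferentiableAt ℂ (zr i) t₀)
    (hfact : ∀ t ∈ U, ∀ z : ℂ, F t z = c t * ∏ i : Fin M, (z - zr i t))
    (hdist : ∀ i j : Fin M, i ≠ j → zr i t₀ ≠ zr j t₀) :
    ∀ i : Fin M, deriv (zr i) t₀ =
      -((b₁ : ℂ) * zr i t₀ + (b₀ : ℂ)) +
        2 * ((a₂ : ℂ) * zr i t₀ ^ 2 + (a₁ : ℂ) * zr i t₀ + (a₀ : ℂ)) *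
          ∑ j ∈ Finset.univ.filter (fun j => j ≠ i), 1 / (zr j t₀ - zr i t₀) := by
  intro i
  let L' : ℂ[X] →ₗ[ℂ] ℂ[X] :=
    LinearMap.mulLeft ℂ (C (a₂ : ℂ) * X ^ 2 + C (a₁ : ℂ) * X + C (a₀ : ℂ)) ∘ₗ
        derivative ∘ₗ derivative +
      LinearMap.mulLeft ℂ (C (b₁ : ℂ) * X + C (b₀ : ℂ)) ∘ₗ derivative
  have hL' : ⇑L' = L := by
    funext q
    simp [L', hL]
  have hp : p ∈ degreeLT ℂ (M + 1) := by
    rw [degreeLT_succ_eq_degreeLE, mem_degreeLE, ← hdeg]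
    exact degree_le_natDegree
  obtain ⟨G, hG, hG'⟩ := exists_flow (M + 1) L'
    (fun q hq => by rw [hL', hL]; exact operator_mem_degreeLT _ _ _ _ _ _ q hq) p hp
  have hFG : ∀ t z, F t z = (G t).eval z := by
    intro t z
    rw [hF, ← hL']
    exact (hG t z).tsum_eq
  have hGt₀ : G t₀ = C (c t₀) * ∏ j, (X - C (zr j t₀)) := by
    refine Polynomial.funext fun z => ?_
    rw [← hFG, hfact t₀ ht₀]
    simp [eval_prod]
  have hzero : (fun t => (G t).eval (zr i t)) =ᶠ[nhds t₀] fun _ => 0 := by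
    filter_upwards [hU.mem_nhds ht₀] with t ht
    rw [← hFG, hfact t ht, Finset.prod_eq_zero (Finset.mem_univ i) (sub_self _), mul_zero]
  have hmain := (hG' (zr i) t₀ _ (hdiff i).hasDerivAt).unique
    ((hasDerivAt_const t₀ (0 : ℂ)).congr_of_eventuallyEq hzero)
  have hr : ∀ j, j ≠ i → zr i t₀ - zr j t₀ ≠ 0 :=
    fun j hj => sub_ne_zero.2 (hdist i j hj.symm)
  rw [hL', hL, hGt₀] at hmain
  simp only [eval_add, eval_mul, eval_C, eval_X, eval_pow] at hmain
  rw [eval_derivative_derivative_prod _ (fun j => zr j t₀) i hr,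
    eval_derivative_prod _ (fun j => zr j t₀) i] at hmain
  have hD : c t₀ * ∏ j ∈ Finset.univ.erase i, (zr i t₀ - zr j t₀) ≠ 0 :=
    mul_ne_zero (hc t₀ ht₀)
      (Finset.prod_ne_zero_iff.2 fun j hj => hr j (Finset.ne_of_mem_erase hj))
  have hS : ∑ j ∈ Finset.univ.filter (fun j => j ≠ i), 1 / (zr j t₀ - zr i t₀) =
      -∑ j ∈ Finset.univ.erase i, 1 / (zr i t₀ - zr j t₀) := by
    rw [Finset.filter_ne', ← Finset.sum_neg_distrib]
    refine Finset.sum_congr rfl fun j _ => ?_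
    rw [← neg_sub, one_div, one_div, inv_neg]
  rw [hS]
  refine mul_left_cancel₀ hD ?_
  linear_combination hmain
end

section
/- Let N ≥ 1 and let Δ_N = ∏_{1≤i<j≤N} (X_j − X_i) be the Vandermonde polynomial in the multivariate polynomial ring ℝ[X₁,…,X_N]. Then Σ_{i=1}^N [ (a₂X_i² + a₁X_i + a₀)·∂²_{X_i}Δ_N + (b₁X_i + b₀)·∂_{X_i}Δ_N ] = λ_N·Δ_N, where λ_N = (1/6)·N·(N−1)·(2a₂(N−2) + 3b₁) and ∂_{X_i} denotes the formal partial derivative in the variable X_i. -/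
/-!
The Vandermonde polynomial is the determinant of the matrix `V i j = X i ^ j`, whose row `i`
involves only the variable `X i`. Put `L_i = (a₂X_i² + a₁X_i + a₀)∂_i² + (b₁X_i + b₀)∂_i`. The
cofactors of row `i` are constants for `∂_i`, so applying `L_i` to the Laplace expansion of `det V`
along row `i` gives `L_i (det V) = ∑ j, L_i (X_i ^ j) * (adj V) j i` (`pderiv_det_vandermonde`).

The one-variable operator does not raise degrees, so on `1, x, …, x^(N-1)` it acts by a constant
matrix `M`, the same for each row: `L_i (X_i ^ j) = (V * M) i j`. Hence
`∑ i, L_i (det V) = tr (V * M * adj V) = tr (adj V * V * M) = tr M * det V`.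
Finally `M` is triangular, with diagonal entries `a₂ k (k - 1) + b₁ k`, and these sum to `λ_N`.
-/

open MvPolynomial

/-- A derivation vanishing on all entries of a matrix vanishes on its determinant. -/
lemma derivation_det_eq_zero {R A n : Type*} [CommRing R] [CommRing A] [Algebra R A] [Fintype n]
    [DecidableEq n] (D : Derivation R A A) (B : Matrix n n A) (h : ∀ i j, D (B i j) = 0) :
    D B.det = 0 := by
  rw [Matrix.det_apply', map_sum]
  refine Finset.sum_eq_zero fun σ _ => ?_
  have hp : D (∏ i, B (σ i) i) = 0 :=
    Finset.prod_induction (fun i => B (σ i) i) (fun x => D x = 0)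
      (fun x y hx hy => by simp [hx, hy]) (by simp) (fun i _ => h _ _)
  simp [hp]

/-- The Vandermonde matrix `V i j = X i ^ j` in the variables of the polynomial ring. -/
noncomputable abbrev vdm (N : ℕ) : Matrix (Fin N) (Fin N) (MvPolynomial (Fin N) ℝ) :=
  Matrix.vandermonde (fun i => X i)

/-- The cofactors of row `i` do not involve the variable `X i`. -/
lemma pderiv_adjugate_vandermonde {N : ℕ} (i j : Fin N) :
    pderiv i ((vdm N).adjugate j i) = 0 := by
  rw [Matrix.adjugate_apply]
  refine derivation_det_eq_zero _ _ fun k l => ?_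
  by_cases hk : k = i
  · subst hk
    by_cases hl : l = j
    · subst hl; simp
    · simp [hl]
  · simp [Matrix.updateRow_ne hk, Matrix.vandermonde_apply, pderiv_X_of_ne hk]

/-- Laplace expansion of the Vandermonde determinant along row `i`. -/
lemma det_vandermonde_laplace {N : ℕ} (i : Fin N) :
    (vdm N).det = ∑ j : Fin N, X i ^ (j : ℕ) * (vdm N).adjugate j i := by
  have h := congrFun (congrFun (Matrix.mul_adjugate (vdm N)) i) i
  simpa [Matrix.mul_apply, Matrix.vandermonde_apply] using h.symm

/-- Only row `i` of the Vandermonde matrix is differentiated by `∂_i`. -/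
lemma pderiv_det_vandermonde {N : ℕ} (i : Fin N) :
    pderiv i (vdm N).det =
        ∑ j : Fin N, pderiv i (X i ^ (j : ℕ)) * (vdm N).adjugate j i ∧
      pderiv i (pderiv i (vdm N).det) =
        ∑ j : Fin N, pderiv i (pderiv i (X i ^ (j : ℕ))) * (vdm N).adjugate j i := by
  have key : ∀ f : Fin N → MvPolynomial (Fin N) ℝ,
      pderiv i (∑ j, f j * (vdm N).adjugate j i) =
        ∑ j, pderiv i (f j) * (vdm N).adjugate j i := fun f => by
    simp [pderiv_adjugate_vandermonde, mul_comm]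
  rw [det_vandermonde_laplace i, key, key]
  exact ⟨rfl, rfl⟩

/-- The matrix of `(a₂x² + a₁x + a₀)∂² + (b₁x + b₀)∂` on the basis `1, x, …, x^(N-1)`; column `j`
lists the coefficients of the image of `x ^ j`. The truncated subtractions are harmless: whenever
`j - 1` or `j - 2` truncates, the corresponding coefficient is zero. -/
noncomputable def opMatrix (a₂ a₁ a₀ b₁ b₀ : ℝ) (N : ℕ) : Matrix (Fin N) (Fin N) ℝ :=
  Matrix.of fun k j =>
    (if (k : ℕ) = j then a₂ * (j * (j - 1)) + b₁ * j else 0) +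
    (if (k : ℕ) = j - 1 then a₁ * (j * (j - 1)) + b₀ * j else 0) +
    (if (k : ℕ) = j - 2 then a₀ * (j * (j - 1)) else 0)

lemma sum_pow_mul_ite {R : Type*} [CommRing R] (N m : ℕ) (hm : m < N) (x c : R) :
    ∑ k : Fin N, x ^ (k : ℕ) * (if (k : ℕ) = m then c else 0) = x ^ m * c := by
  rw [Fin.sum_univ_eq_sum_range (fun k => x ^ k * (if k = m then c else 0))]
  simp [hm]

/-- `opMatrix` represents the operator: applied to `X i ^ j` it gives the entry `(i, j)` of
`V * opMatrix`. -/
lemma operator_pow (a₂ a₁ a₀ b₁ b₀ : ℝ) {N : ℕ} (i j : Fin N) :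
    (C a₂ * X i ^ 2 + C a₁ * X i + C a₀) * pderiv i (pderiv i (X i ^ (j : ℕ))) +
        (C b₁ * X i + C b₀) * pderiv i (X i ^ (j : ℕ)) =
      (vdm N * (opMatrix a₂ a₁ a₀ b₁ b₀ N).map (C : ℝ → MvPolynomial (Fin N) ℝ) :
        Matrix (Fin N) (Fin N) (MvPolynomial (Fin N) ℝ)) i j := by
  have hj := j.isLt
  simp only [Matrix.mul_apply, Matrix.vandermonde_apply, Matrix.map_apply, opMatrix,
    Matrix.of_apply, map_add, mul_add, Finset.sum_add_distrib, apply_ite (C : ℝ → MvPolynomial (Fin N) ℝ), map_zero]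
  rw [sum_pow_mul_ite N _ hj, sum_pow_mul_ite N _ (by lia), sum_pow_mul_ite N _ (by lia)]
  rcases (j : ℕ) with _ | _ | n
  · simp
  · simp; ring
  · simp
    ring

lemma trace_opMatrix (a₂ a₁ a₀ b₁ b₀ : ℝ) (N : ℕ) :
    (opMatrix a₂ a₁ a₀ b₁ b₀ N).trace =
      (1 / 6 : ℝ) * (N : ℝ) * ((N : ℝ) - 1) * (2 * a₂ * ((N : ℝ) - 2) + 3 * b₁) := by
  have hd : ∀ k : Fin N, (opMatrix a₂ a₁ a₀ b₁ b₀ N) k k =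
      a₂ * ((k : ℕ) * ((k : ℕ) - 1)) + b₁ * (k : ℕ) := fun k => by
    simp only [opMatrix, Matrix.of_apply]
    rcases (k : ℕ) with _ | n
    · simp
    · simp
      lia
  simp only [Matrix.trace, Matrix.diag_apply, hd]
  rw [Fin.sum_univ_eq_sum_range (fun k : ℕ => a₂ * ((k : ℝ) * ((k : ℝ) - 1)) + b₁ * (k : ℝ))]
  clear hd
  induction N with
  | zero => simp
  | succ n ih =>
    rw [Finset.sum_range_succ, ih]
    push_cast
    ring

/-- The Vandermonde polynomial `Δ_N = ∏_{i<j}(X_j − X_i)` is an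
eigenfunction of `Σ_i a(X_i)∂²_i + b(X_i)∂_i` with eigenvalue
`λ_N = (1/6)N(N−1)(2a₂(N−2)+3b₁)`. -/
theorem vandermonde_eigenfunction (a₂ a₁ a₀ b₁ b₀ : ℝ) (N : ℕ) (hN : 1 ≤ N) :
    ∑ i : Fin N,
        ((C a₂ * X i ^ 2 + C a₁ * X i + C a₀) *
            pderiv i (pderiv i (∏ k : Fin N, ∏ j ∈ Finset.Ioi k, (X j - X k))) +
          (C b₁ * X i + C b₀) *
            pderiv i (∏ k : Fin N, ∏ j ∈ Finset.Ioi k, (X j - X k))) =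
      C ((1 / 6 : ℝ) * (N : ℝ) * ((N : ℝ) - 1) * (2 * a₂ * ((N : ℝ) - 2) + 3 * b₁)) *
        ∏ k : Fin N, ∏ j ∈ Finset.Ioi k, (X j - X k) := by
  have hV : (∏ k : Fin N, ∏ j ∈ Finset.Ioi k, (X j - X k) : MvPolynomial (Fin N) ℝ) =
      (vdm N).det := (Matrix.det_vandermonde _).symm
  rw [hV, ← trace_opMatrix a₂ a₁ a₀ b₁ b₀ N]
  set M := (opMatrix a₂ a₁ a₀ b₁ b₀ N).map (C : ℝ → MvPolynomial (Fin N) ℝ) with hM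
  calc _ = (vdm N * M * (vdm N).adjugate).trace := by
        refine Finset.sum_congr rfl fun i _ => ?_
        rw [Matrix.diag_apply, Matrix.mul_apply, (pderiv_det_vandermonde i).2,
          (pderiv_det_vandermonde i).1, Finset.mul_sum, Finset.mul_sum, ← Finset.sum_add_distrib]
        refine Finset.sum_congr rfl fun j _ => ?_
        rw [hM, ← operator_pow]
        ring
    _ = (vdm N).det * M.trace := by
        rw [Matrix.trace_mul_comm, ← Matrix.mul_assoc, Matrix.adjugate_mul, Matrix.smul_mul,
          Matrix.one_mul, Matrix.trace_smul, smul_eq_mul]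
    _ = _ := by
        rw [mul_comm]
        simp [hM, Matrix.trace, map_sum]
end

section
/- Let k ∈ ℕ and let p₀, p₁, …, p_k be real numbers (not necessarily distinct). Then there exists a unique real polynomial q of degree at most k such that for every i with 0 ≤ i ≤ k, the i-th derivative of q evaluated at p_i equals (−1)^k if i = k and equals 0 otherwise. Moreover this unique q has degree exactly k. -/
open Polynomial

/-!
The conditions form a triangular system in the coefficients of `q`: the `i`-th one involves only
coefficients of index at least `i`, and the coefficient of index `i` enters with factor `i! ≠ 0`.
Uniqueness (`eq_zero_of_eval_iterate_derivative`): a nonzero polynomial of degree `d` has constant,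
nonzero `d`-th derivative, so it cannot satisfy the homogeneous `d`-th condition.
Existence (`exists_eval_iterate_derivative`): the top coefficient is forced by the last condition;
subtracting the leading term leaves a problem of the same kind, of one degree less and with
modified data, which is why arbitrary right-hand sides are allowed there.
The degree is exactly `k` because the `k`-th derivative does not vanish.
-/

lemma eval_iterate_derivative_natDegree (r : ℝ[X]) (x : ℝ) :
    (derivative^[r.natDegree] r).eval x = r.natDegree.factorial * r.leadingCoeff := by
  have h : (derivative^[r.natDegree] r).natDegree = 0 := by
    have := natDegree_iterate_derivative r r.natDegree
    omega
  rw [eq_C_of_natDegree_eq_zero h, eval_C, coeff_iterate_derivative]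
  simp [Nat.descFactorial_self]

lemma eq_zero_of_eval_iterate_derivative {k : ℕ} {p : ℕ → ℝ} {r : ℝ[X]} (hr : r.natDegree ≤ k)
    (h : ∀ i ≤ k, (derivative^[i] r).eval (p i) = 0) : r = 0 := by
  have := h _ hr
  rw [eval_iterate_derivative_natDegree] at this
  simpa [Nat.factorial_ne_zero] using this

lemma exists_eval_iterate_derivative (k : ℕ) (p c : ℕ → ℝ) :
    ∃ q : ℝ[X], q.natDegree ≤ k ∧ ∀ i ≤ k, (derivative^[i] q).eval (p i) = c i := by
  induction k generalizing c with
  | zero => exact ⟨C (c 0), by simp, by simp⟩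
  | succ k ih =>
    -- The leading term forced by the condition on the derivative of order `k + 1`.
    let m : ℝ[X] := C (c (k + 1) / (k + 1).factorial) * X ^ (k + 1)
    obtain ⟨q, hq, hc⟩ := ih fun i ↦ c i - (derivative^[i] m).eval (p i)
    refine ⟨q + m, ?_, fun i hi ↦ ?_⟩
    · exact natDegree_add_le_of_degree_le (by omega) (natDegree_C_mul_X_pow_le _ _)
    · rw [iterate_map_add, eval_add]
      rcases hi.lt_or_eq with hi | rfl
      · rw [hc i (by omega)]
        ring
      · rw [iterate_derivative_eq_zero (by omega : q.natDegree < k + 1),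
          iterate_derivative_C_mul, iterate_derivative_X_pow_eq_smul,
          Nat.descFactorial_self]
        have : ((k + 1).factorial : ℝ) ≠ 0 := by positivity
        simp only [eval_zero, zero_add, tsub_self, pow_zero, eval_mul, eval_C, eval_smul, eval_one, smul_eq_mul,
          mul_one]
        field_simp

/-- Existence, uniqueness (among polynomials of degree at most `k`) and
exact degree `k` of the polynomial `q` with `q^{(i)}(p_i) = (−1)^k·1_{(i=k)}` for
`i = 0,…,k` (the polynomials `q_k^{(n)}(·;x)` of the paper). -/
theorem interpolation_polynomial_exists_unique (k : ℕ) (p : Fin (k + 1) → ℝ) :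
    ∃ q : Polynomial ℝ, q.natDegree = k ∧
      (∀ i : Fin (k + 1),
        (derivative^[(i : ℕ)] q).eval (p i) = if (i : ℕ) = k then (-1 : ℝ) ^ k else 0) ∧
      ∀ q' : Polynomial ℝ, q'.natDegree ≤ k →
        (∀ i : Fin (k + 1),
          (derivative^[(i : ℕ)] q').eval (p i) = if (i : ℕ) = k then (-1 : ℝ) ^ k else 0) →
        q' = q := by
  -- `Fin.ofNat` extends the nodes to all of `ℕ`; only the indices `i ≤ k` matter.
  have hp (i : Fin (k + 1)) : Fin.ofNat (k + 1) i = i := by simp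
  obtain ⟨q, hq, hc⟩ := exists_eval_iterate_derivative k (fun i ↦ p (Fin.ofNat (k + 1) i))
    fun i ↦ if i = k then (-1 : ℝ) ^ k else 0
  refine ⟨q, hq.antisymm ?_, fun i ↦ ?_, fun q' hq' hc' ↦ ?_⟩
  · by_contra! hlt
    have := hc k le_rfl
    rw [iterate_derivative_eq_zero hlt] at this
    simp [eq_comm (a := (0 : ℝ))] at this
  · have := hc i (by omega)
    simpa only [hp] using this
  · rw [← sub_eq_zero]
    refine eq_zero_of_eval_iterate_derivative (k := k) (p := fun i ↦ p (Fin.ofNat (k + 1) i))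
      (natDegree_sub_le_of_le hq' hq |>.trans (by simp)) fun i hi ↦ ?_
    have hi' : Fin.ofNat (k + 1) i = ⟨i, by omega⟩ := hp ⟨i, by omega⟩
    rw [iterate_derivative_sub, eval_sub, hc i hi, sub_eq_zero, hi']
    exact hc' ⟨i, by omega⟩
end

section
/- Let K be a field (e.g. ℂ), let N ≥ 1, let x₁,…,x_N ∈ K, and let z, w ∈ K with z ≠ x_m for every m and w ≠ z. Then Σ_{i=1}^{N} (∏_{m=1}^{i−1}(w − x_m)) / (∏_{m=1}^{i}(z − x_m)) = ( ∏_{m=1}^{N} (w − x_m)/(z − x_m) − 1 ) / (w − z). -/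
/-!
Write `P n = ∏ m < n, (w - x m) / (z - x m)`. Since `(w - x n) - (z - x n) = w - z`, the difference
`P (n + 1) - P n` is `w - z` times the `n`-th summand, so the sum telescopes to
`(P N - P 0) / (w - z)` with `P 0 = 1`. The proof is this computation by induction, starting from
the empty sum.
-/

/-- The telescoping identity
`Σ_{i=1}^N ∏_{m=1}^{i−1}(w−x_m)/∏_{m=1}^{i}(z−x_m)
  = (∏_{m=1}^N (w−x_m)/(z−x_m) − 1)/(w−z)`. -/
theorem telescoping_partial_fraction_sum {K : Type*} [Field K] (N : ℕ) (hN : 1 ≤ N)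
    (x : ℕ → K) (z w : K) (hz : ∀ m < N, z ≠ x m) (hw : w ≠ z) :
    ∑ i ∈ Finset.range N,
        (∏ m ∈ Finset.range i, (w - x m)) / (∏ m ∈ Finset.range (i + 1), (z - x m)) =
      ((∏ m ∈ Finset.range N, (w - x m) / (z - x m)) - 1) / (w - z) := by
  clear hN
  induction N with
  | zero => simp
  | succ n ih =>
    have hB : ∏ m ∈ Finset.range n, (z - x m) ≠ 0 :=
      Finset.prod_ne_zero_iff.mpr fun m hm =>
        sub_ne_zero.mpr (hz m (Nat.lt_succ_of_lt (Finset.mem_range.mp hm)))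
    have hc : z - x n ≠ 0 := sub_ne_zero.mpr (hz n n.lt_succ_self)
    have hwz : w - z ≠ 0 := sub_ne_zero.mpr hw
    rw [Finset.sum_range_succ, ih fun m hm => hz m (Nat.lt_succ_of_lt hm)]
    simp only [Finset.prod_div_distrib, Finset.prod_range_succ]
    field_simp
    ring
end

section
/- Fix real numbers θ and t and let B_θ be the linear operator on ℝ[X] given by B_θ p = 2·X·p'' + θ·p' (formal derivatives). Then for every n ∈ ℕ, Σ_{j=0}^{n} ((−t)^j / j!) · B_θ^j(X^n) = Σ_{k=0}^{n} (n choose k) · (−t)^{n−k} · (∏_{m=k}^{n−1}(θ + 2m)) · X^k, an identity of polynomials in ℝ[X]. (Since B_θ strictly lowers degree, B_θ^j(X^n) = 0 for j > n, so this finite sum equals the full exponential series e^{−tB_θ}X^n; the right-hand side is n!(−2t)^n L_n^{(θ/2−1)}(X/(2t)) where L_n^{(α)} is the generalized Laguerre polynomial.) -/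
/-!
The operator acts on monomials as a weighted lowering operator,
`B_θ (c X^(k+1)) = c (k+1)(θ+2k) X^k`. Iterating, `B_θ^j X^(k+j)` is the monomial `X^k` with
coefficient `(k+j)(k+j-1)⋯(k+1) ∏_{m=k}^{k+j-1} (θ+2m)`. Setting `k = n - j`, dividing the falling
factorial by `j!` gives the binomial coefficient `n choose j = n choose k`, so both sides agree
term by term after reversing the order of summation.
-/

open Polynomial

/-- The generator lowers the degree of a monomial by one. -/
lemma besq_monomial (θ : ℝ) (Bθ : Polynomial ℝ → Polynomial ℝ)
    (hB : ∀ p : Polynomial ℝ,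
      Bθ p = C 2 * X * derivative (derivative p) + C θ * derivative p)
    (c : ℝ) (k : ℕ) :
    Bθ (C c * X ^ (k + 1)) = C (c * ((k + 1) * (θ + 2 * k))) * X ^ k := by
  rw [hB]
  -- `k = 0` is separate because the second derivative of `X` vanishes.
  cases k with
  | zero => simp; ring
  | succ k =>
    simp only [derivative_C_mul_X_pow, Nat.add_sub_cancel]
    simp only [map_mul, map_add, map_natCast, map_one, Nat.cast_add, Nat.cast_one]
    ring

/-- The exponent is written `k + j` so that no truncated subtraction appears. -/
lemma besq_iterate_monomial (θ : ℝ) (Bθ : Polynomial ℝ → Polynomial ℝ)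
    (hB : ∀ p : Polynomial ℝ,
      Bθ p = C 2 * X * derivative (derivative p) + C θ * derivative p)
    (j k : ℕ) :
    Bθ^[j] (X ^ (k + j)) =
      C (((k + j).descFactorial j : ℝ) * ∏ m ∈ Finset.Ico k (k + j), (θ + 2 * (m : ℝ))) *
        X ^ k := by
  induction j generalizing k with
  | zero => simp
  | succ j ih =>
    have e : k + (j + 1) = k + 1 + j := by ring
    rw [Function.iterate_succ_apply', e, ih, besq_monomial θ Bθ hB, Nat.descFactorial_succ,
      Finset.prod_eq_prod_Ico_succ_bot (by omega : k < k + 1 + j), Nat.add_sub_cancel]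
    congr 2
    push_cast
    ring

/-- For the squared Bessel generator `B_θ p = 2X·p'' + θ·p'`,
`Σ_{j=0}^n ((−t)^j/j!) B_θ^j(X^n) = Σ_{k=0}^n (n choose k)(−t)^{n−k}(∏_{m=k}^{n−1}(θ+2m)) X^k`,
i.e. `e^{−tB_θ}X^n = n!(−2t)^n L_n^{(θ/2−1)}(X/(2t))`. -/
theorem squared_bessel_flow_on_monomials (θ t : ℝ)
    (Bθ : Polynomial ℝ → Polynomial ℝ)
    (hB : ∀ p : Polynomial ℝ,
      Bθ p = C 2 * X * derivative (derivative p) + C θ * derivative p)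
    (n : ℕ) :
    ∑ j ∈ Finset.range (n + 1), C ((-t) ^ j / (j.factorial : ℝ)) * Bθ^[j] (X ^ n) =
      ∑ k ∈ Finset.range (n + 1),
        C ((n.choose k : ℝ) * (-t) ^ (n - k) * ∏ m ∈ Finset.Ico k n, (θ + 2 * (m : ℝ))) *
          X ^ k := by
  rw [← Finset.sum_range_reflect _ (n + 1)]
  refine Finset.sum_congr rfl fun k hk => ?_
  obtain ⟨j, rfl⟩ := Nat.exists_eq_add_of_le (Nat.lt_succ_iff.mp (Finset.mem_range.mp hk))
  -- After reflection the iteration count is `j` and `k` is the surviving degree.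
  have e : k + j + 1 - 1 - k = j := by omega
  have e' : k + j - k = j := by omega
  have hj : (j.factorial : ℝ) ≠ 0 := by exact_mod_cast j.factorial_ne_zero
  rw [e, e', besq_iterate_monomial θ Bθ hB, ← mul_assoc, ← C_mul, Nat.choose_symm_add,
    Nat.descFactorial_eq_factorial_mul_choose]
  congr 2
  push_cast
  field_simp
end

section
/- Suppose E : ℂ → ℂ[X] → ℂ[X] satisfies, for every t ∈ ℂ, every polynomial p and every index i ∈ ℕ: the coefficient of X^i in E t p equals Σ'_{j=0}^∞ (t^j/j!)·(coefficient of X^i in L^j p). Then for every nonzero polynomial p and every t ∈ ℂ, the natural degree of E t p equals the natural degree of p; that is, the flow e^{tL} maps the set of polynomials of degree exactly M to itself for every M and every complex time t. -/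
open Polynomial

/-!
In the monomial basis `L` is upper triangular: `L X^i` has degree at most `i`, and its coefficient
of `X^i` is `μ i = a₂ i (i - 1) + b₁ i` (`coeff_hypergeometric`). Hence for `p` of degree `n` the
coefficients of `L^j p` vanish above `n`, and the one at `n` is `μ n ^ j` times the leading
coefficient of `p` (`coeff_iterate_of_triangular`). Summing the series, `E t p` has no coefficient
above `n`, and its coefficient at `n` is `exp (t * μ n)` times that of `p`, which is nonzero.
-/

/-- The matrix of `p ↦ a p'' + b p'` in the monomial basis, with `deg a ≤ 2` and `deg b ≤ 1`. -/
lemma coeff_hypergeometric (a₂ a₁ a₀ b₁ b₀ : ℂ) (p : Polynomial ℂ) (i : ℕ) :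
    ((C a₂ * X ^ 2 + C a₁ * X + C a₀) * derivative (derivative p) +
        (C b₁ * X + C b₀) * derivative p).coeff i =
      (a₂ * (i * (i - 1)) + b₁ * i) * p.coeff i +
        (a₁ * ((i + 1) * i) + b₀ * (i + 1)) * p.coeff (i + 1) +
        a₀ * ((i + 2) * (i + 1)) * p.coeff (i + 2) := by
  simp only [add_mul, mul_assoc, coeff_add, coeff_C_mul]
  rcases i with _ | _ | i
  · simp [coeff_derivative]
    ring
  · simp [coeff_X_pow_mul', coeff_X_mul, coeff_derivative]
    ring
  · simp [coeff_X_pow_mul', coeff_X_mul, coeff_derivative]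
    ring

/-- An operator which is upper triangular in the monomial basis in this sense acts on the
coefficients at and above the degree `n` of `p` through its diagonal `μ` alone. -/
lemma coeff_iterate_of_triangular (L : Polynomial ℂ → Polynomial ℂ) (μ r s : ℕ → ℂ)
    (hL : ∀ p i, (L p).coeff i = μ i * p.coeff i + r i * p.coeff (i + 1) + s i * p.coeff (i + 2))
    (p : Polynomial ℂ) (j i : ℕ) (hi : p.natDegree ≤ i) :
    (L^[j] p).coeff i = μ i ^ j * p.coeff i := by
  induction j generalizing i with
  | zero => simp
  | succ j ih =>
    rw [Function.iterate_succ_apply', hL, ih i hi, ih (i + 1) (by omega), ih (i + 2) (by omega),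
      coeff_eq_zero_of_natDegree_lt (show p.natDegree < i + 1 by omega),
      coeff_eq_zero_of_natDegree_lt (show p.natDegree < i + 2 by omega)]
    ring

/-- The flow `e^{tL}` preserves the exact degree: if
`(E t p).coeff i = Σ'_j (t^j/j!)·(L^j p).coeff i`, then for every nonzero `p` and
every `t ∈ ℂ`, the natural degree of `E t p` equals that of `p`. -/
theorem backward_flow_preserves_degree (a₂ a₁ a₀ b₁ b₀ : ℝ)
    (L : Polynomial ℂ → Polynomial ℂ)
    (hL : ∀ p : Polynomial ℂ, L p =
      (C (a₂ : ℂ) * X ^ 2 + C (a₁ : ℂ) * X + C (a₀ : ℂ)) * derivative (derivative p) +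
        (C (b₁ : ℂ) * X + C (b₀ : ℂ)) * derivative p)
    (E : ℂ → Polynomial ℂ → Polynomial ℂ)
    (hE : ∀ (t : ℂ) (p : Polynomial ℂ) (i : ℕ),
      (E t p).coeff i = ∑' j : ℕ, t ^ j / (j.factorial : ℂ) * ((L^[j] p).coeff i)) :
    ∀ p : Polynomial ℂ, p ≠ 0 → ∀ t : ℂ, (E t p).natDegree = p.natDegree := by
  intro p hp t
  have key : ∀ i, p.natDegree ≤ i → (E t p).coeff i =
      Complex.exp (t * (a₂ * (i * (i - 1)) + b₁ * i)) * p.coeff i := by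
    intro i hi
    have hit := coeff_iterate_of_triangular L _ _ _
      (fun q k => by rw [hL]; exact coeff_hypergeometric a₂ a₁ a₀ b₁ b₀ q k) p
    rw [hE, Complex.exp_eq_exp_ℂ, NormedSpace.exp_eq_tsum_div, ← tsum_mul_right]
    refine tsum_congr fun j => ?_
    rw [hit j i hi, mul_pow]
    ring
  apply natDegree_eq_of_le_of_coeff_ne_zero
  · rw [natDegree_le_iff_coeff_eq_zero]
    intro i hi
    rw [key i hi.le, coeff_eq_zero_of_natDegree_lt hi, mul_zero]
  · rw [key _ le_rfl]
    exact mul_ne_zero (Complex.exp_ne_zero _) (leadingCoeff_ne_zero.mpr hp)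
end
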